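/- Let B and C be MV-algebras with C nontrivial, and let θ: B → C be a homomorphism such that θ(b) ∈ {0,1} for every b ∈ P(B). Then θ(b)=0 for every b ∈ Rad(B); consequently there exists a unique homomorphism θ': S(B) → C with θ'∘η_B = θ. (This is the precokernel property of η_B: B → S(B) with respect to the inclusion P(B) ↪ B.) -/

import Mathlib

namespace MVPaper

/-- An MV-algebra: a set with a binary `⊕`, a unary `¬`, and a constant `0`
satisfying the MV-algebra axioms. -/
class MV (α : Type*) where
  oplus : α → α → α
  neg : α → α
  zero : α
  oplus_assoc : ∀ x y z : α, oplus x (oplus y z) = oplus (oplus x y) z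
  oplus_comm : ∀ x y : α, oplus x y = oplus y x
  oplus_zero : ∀ x : α, oplus x zero = x
  neg_neg : ∀ x : α, neg (neg x) = x
  oplus_neg_zero : ∀ x : α, oplus x (neg zero) = neg zero
  lukasiewicz : ∀ x y : α,
    oplus (neg (oplus (neg x) y)) y = oplus (neg (oplus (neg y) x)) x

namespace MV

variable {α : Type*} [MV α]

/-- `1 := ¬0`. -/
def one : α := neg zero

/-- `x ⊙ y := ¬(¬x ⊕ ¬y)`. -/
def odot (x y : α) : α := neg (oplus (neg x) (neg y))

/-- `x ⊖ y := ¬(¬x ⊕ y)`. -/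
def ominus (x y : α) : α := neg (oplus (neg x) y)

/-- `d(x,y) := (x ⊖ y) ⊕ (y ⊖ x)`. -/
def dist (x y : α) : α := oplus (ominus x y) (ominus y x)

/-- The natural order: `x ≤ y` iff `¬x ⊕ y = 1`. -/
def le (x y : α) : Prop := oplus (neg x) y = one

/-- `x ∨ y := (x ⊖ y) ⊕ y`. -/
def sup (x y : α) : α := oplus (ominus x y) y

/-- `x ∧ y := x ⊙ (¬x ⊕ y)`. -/
def inf (x y : α) : α := odot x (oplus (neg x) y)

/-- `n · a`, the `n`-fold sum `a ⊕ ⋯ ⊕ a`. -/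
def nsmul : ℕ → α → α
  | 0, _ => zero
  | n + 1, a => oplus a (nsmul n a)

end MV

/-- Products of MV-algebras, with componentwise operations. -/
instance prodMV {α β : Type*} [MV α] [MV β] : MV (α × β) where
  oplus x y := (MV.oplus x.1 y.1, MV.oplus x.2 y.2)
  neg x := (MV.neg x.1, MV.neg x.2)
  zero := (MV.zero, MV.zero)
  oplus_assoc x y z :=
    congrArg₂ Prod.mk (MV.oplus_assoc _ _ _) (MV.oplus_assoc _ _ _)
  oplus_comm x y :=
    congrArg₂ Prod.mk (MV.oplus_comm _ _) (MV.oplus_comm _ _)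
  oplus_zero x := by
    obtain ⟨a, b⟩ := x
    exact congrArg₂ Prod.mk (MV.oplus_zero a) (MV.oplus_zero b)
  neg_neg x := by
    obtain ⟨a, b⟩ := x
    exact congrArg₂ Prod.mk (MV.neg_neg a) (MV.neg_neg b)
  oplus_neg_zero x :=
    congrArg₂ Prod.mk (MV.oplus_neg_zero _) (MV.oplus_neg_zero _)
  lukasiewicz x y :=
    congrArg₂ Prod.mk (MV.lukasiewicz _ _) (MV.lukasiewicz _ _)

/-- A homomorphism of MV-algebras: a map preserving `⊕`, `¬` and `0`. -/
structure IsHom {α β : Type*} [MV α] [MV β] (f : α → β) : Prop where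
  map_zero : f MV.zero = MV.zero
  map_oplus : ∀ x y : α, f (MV.oplus x y) = MV.oplus (f x) (f y)
  map_neg : ∀ x : α, f (MV.neg x) = MV.neg (f x)

/-- An ideal of an MV-algebra: contains `0`, closed under `⊕`, downward closed. -/
structure IsIdeal {α : Type*} [MV α] (I : Set α) : Prop where
  zero_mem : MV.zero ∈ I
  oplus_mem : ∀ ⦃x⦄, x ∈ I → ∀ ⦃y⦄, y ∈ I → MV.oplus x y ∈ I
  lower_mem : ∀ ⦃x⦄, x ∈ I → ∀ ⦃y⦄, MV.le y x → y ∈ I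

/-- The kernel of a homomorphism. -/
def ker {α β : Type*} [MV α] [MV β] (f : α → β) : Set α := {x | f x = MV.zero}

/-- The radical of an MV-algebra: `Rad(A) = {a | n·a ≤ ¬a for all n}`
(the intersection of all maximal proper ideals). -/
def Rad (α : Type*) [MV α] : Set α :=
  {a | ∀ n : ℕ, MV.le (MV.nsmul n a) (MV.neg a)}

/-- `P(A) := Rad(A) ∪ ¬Rad(A)`. -/
def PSet (α : Type*) [MV α] : Set α :=
  Rad α ∪ {x | MV.neg x ∈ Rad α}

/-- An MV-algebra is trivial if `0 = 1`. -/
def IsTrivial (α : Type*) [MV α] : Prop := (MV.zero : α) = MV.one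

/-- An MV-algebra is semisimple if its radical is trivial. -/
def Semisimple (α : Type*) [MV α] : Prop := Rad α = ({MV.zero} : Set α)

/-- An MV-algebra is perfect if `A = Rad(A) ∪ ¬Rad(A)`. -/
def Perfect (α : Type*) [MV α] : Prop := ∀ a : α, a ∈ PSet α

/-- `q : α → Q` realizes `Q` as the quotient of `α` by the ideal `I`,
i.e. by the congruence `x ∼ y ↔ d(x,y) ∈ I`. -/
structure IsQuotientBy {α Q : Type*} [MV α] [MV Q] (I : Set α) (q : α → Q) : Prop where
  hom : IsHom q
  surj : Function.Surjective q
  eq_iff : ∀ x y : α, q x = q y ↔ MV.dist x y ∈ I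

namespace MV

variable {α : Type*} [MV α]

/-- Boolean elements of an MV-algebra, i.e. its idempotents. Idempotence for `⊙` and for `⊕` are
equivalent; the `⊙` form is chosen because elements of the radical satisfy `a ⊙ a = 0`. -/
def IsBoolean (a : α) : Prop := odot a a = a

theorem zero_oplus (x : α) : oplus zero x = x := by
  rw [oplus_comm, oplus_zero]

theorem neg_one : neg (one : α) = zero := neg_neg zero

theorem neg_oplus_self (x : α) : oplus (neg x) x = one := by
  have h := lukasiewicz (neg zero) x
  rwa [neg_neg, zero_oplus, oplus_neg_zero] at h

theorem isBoolean_zero : IsBoolean (zero : α) := by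
  rw [IsBoolean, odot, oplus_neg_zero, neg_neg]

theorem isBoolean_one : IsBoolean (one : α) := by
  rw [IsBoolean, odot, neg_one, oplus_zero, one]

theorem neg_eq_zero_iff {x : α} : neg x = zero ↔ x = one :=
  ⟨fun h => by rw [← neg_neg x, h, one], fun h => by rw [h, neg_one]⟩

theorem ominus_eq_zero_iff {x y : α} : ominus x y = zero ↔ le x y :=
  neg_eq_zero_iff

theorem le_antisymm {x y : α} (hxy : le x y) (hyx : le y x) : x = y :=
  calc
    x = oplus (ominus y x) x := by rw [ominus_eq_zero_iff.2 hyx, zero_oplus]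
    _ = oplus (ominus x y) y := lukasiewicz y x
    _ = y := by rw [ominus_eq_zero_iff.2 hxy, zero_oplus]

theorem le_self_oplus (x y : α) : le x (oplus x y) := by
  rw [le, oplus_assoc, neg_oplus_self, oplus_comm, one, oplus_neg_zero]

theorem eq_zero_of_le_zero {x : α} (h : le x zero) : x = zero := by
  rwa [le, oplus_zero, ← neg_eq_zero_iff, neg_neg] at h

theorem oplus_eq_zero_iff {x y : α} : oplus x y = zero ↔ x = zero ∧ y = zero := by
  refine ⟨fun h => ⟨eq_zero_of_le_zero ?_, eq_zero_of_le_zero ?_⟩, ?_⟩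
  · exact h ▸ le_self_oplus x y
  · rw [oplus_comm] at h
    exact h ▸ le_self_oplus y x
  · rintro ⟨rfl, rfl⟩
    exact oplus_zero zero

theorem dist_eq_zero_iff {x y : α} : dist x y = zero ↔ x = y := by
  rw [dist, oplus_eq_zero_iff, ominus_eq_zero_iff, ominus_eq_zero_iff]
  refine ⟨fun h => le_antisymm h.1 h.2, ?_⟩
  rintro rfl
  exact ⟨neg_oplus_self x, neg_oplus_self x⟩

theorem odot_self_of_mem_rad {a : α} (ha : a ∈ Rad α) : odot a a = zero := by
  have h : le (oplus a zero) (neg a) := ha 1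
  rw [oplus_zero] at h
  exact neg_eq_zero_iff.2 h

end MV

namespace IsHom

variable {α β : Type*} [MV α] [MV β] {f : α → β}

theorem map_odot (hf : IsHom f) (x y : α) : f (MV.odot x y) = MV.odot (f x) (f y) := by
  simp only [MV.odot, hf.map_oplus, hf.map_neg]

theorem map_dist (hf : IsHom f) (x y : α) : f (MV.dist x y) = MV.dist (f x) (f y) := by
  simp only [MV.dist, MV.ominus, hf.map_oplus, hf.map_neg]

theorem rad_subset_ker (hf : IsHom f) (hBool : ∀ a ∈ Rad α, MV.IsBoolean (f a)) :
    Rad α ⊆ ker f := fun a ha =>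
  calc
    f a = MV.odot (f a) (f a) := (hBool a ha).symm
    _ = f (MV.odot a a) := (hf.map_odot a a).symm
    _ = f MV.zero := by rw [MV.odot_self_of_mem_rad ha]
    _ = MV.zero := hf.map_zero

theorem of_comp_surjective {Q : Type*} [MV Q] {q : α → Q} {g : Q → β} (hgq : IsHom (g ∘ q))
    (hq : IsHom q) (hsurj : Function.Surjective q) : IsHom g where
  map_zero := by rw [← hq.map_zero]; exact hgq.map_zero
  map_oplus := hsurj.forall₂.2 fun x y => by rw [← hq.map_oplus]; exact hgq.map_oplus x y
  map_neg := hsurj.forall.2 fun x => by rw [← hq.map_neg]; exact hgq.map_neg x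

end IsHom

theorem IsQuotientBy.existsUnique_factor {α β Q : Type*} [MV α] [MV β] [MV Q] {I : Set α}
    {q : α → Q} {f : α → β} (hq : IsQuotientBy I q) (hf : IsHom f) (hI : I ⊆ ker f) :
    ∃! g : Q → β, IsHom g ∧ g ∘ q = f := by
  have hfactors : f.FactorsThrough q := fun x y hxy => by
    rw [← MV.dist_eq_zero_iff, ← hf.map_dist]
    exact hI ((hq.eq_iff x y).1 hxy)
  have : Nonempty β := ⟨MV.zero⟩
  obtain ⟨g, rfl⟩ := (Function.factorsThrough_iff f).1 hfactors
  exact ⟨g, ⟨hf.of_comp_surjective hq.hom hq.surj, rfl⟩,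
    fun _ hg' => hq.surj.injective_comp_right hg'.2⟩

theorem precokernel_property_general {β γ SB : Type*} [MV β] [MV γ] [MV SB]
    {θ : β → γ} (hθ : IsHom θ) (hBool : ∀ b ∈ Rad β, MV.IsBoolean (θ b))
    {ηB : β → SB} (hηB : IsQuotientBy (Rad β) ηB) :
    (∀ b ∈ Rad β, θ b = MV.zero) ∧
    ∃! θ' : SB → γ, IsHom θ' ∧ θ' ∘ ηB = θ :=
  have hRad : Rad β ⊆ ker θ := hθ.rad_subset_ker hBool
  ⟨hRad, hηB.existsUnique_factor hθ hRad⟩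

/-- Precokernel property of `η_B : B → S(B)` with respect to the inclusion
`P(B) ↪ B`: if `C` is nontrivial and `θ : B → C` is a homomorphism with
`θ(b) ∈ {0,1}` for every `b ∈ P(B)`, then `θ` vanishes on `Rad(B)` and
factors uniquely as `θ' ∘ η_B = θ` with `θ' : S(B) → C` a homomorphism. -/
theorem precokernel_property {β γ SB : Type*} [MV β] [MV γ] [MV SB]
    (hCnt : ¬ IsTrivial γ)
    {θ : β → γ} (hθ : IsHom θ)
    (hθP : ∀ b ∈ PSet β, θ b = MV.zero ∨ θ b = MV.one)
    {ηB : β → SB} (hηB : IsQuotientBy (Rad β) ηB) :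
    (∀ b ∈ Rad β, θ b = MV.zero) ∧
    ∃! θ' : SB → γ, IsHom θ' ∧ θ' ∘ ηB = θ :=
  precokernel_property_general hθ (fun b hb => (hθP b (Or.inl hb)).elim
    (fun h => h ▸ MV.isBoolean_zero) (fun h => h ▸ MV.isBoolean_one)) hηB

end MVPaper
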